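/- arXiv:1809.10181 — 4 statements merged into one kernel-verified Lean document; each statement's English description precedes it below -/
import Mathlib

section
/- Let V be a real Hilbert space and E a real normed vector space. Let a : V × V → ℝ be a continuous bilinear form, B : E → (continuous bilinear forms on V) a continuous linear map with operator norm ‖B‖, and F : V → ℝ a continuous linear functional. For p ∈ E set A_p(w,φ) := a(w,φ) + (B p)(w,φ), and let c > 0. Suppose q, r ∈ E are such that A_q and A_r are both c-coercive, and let u_q, u_r ∈ V be the unique (Lax–Milgram) solutions of A_q(u_q, φ) = F(φ) and A_r(u_r, φ) = F(φ) for all φ ∈ V. Then the solution map is Lipschitz in the coefficient: ‖u_q − u_r‖_V ≤ c⁻² ‖B‖ ‖F‖ ‖q − r‖_E. -/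
set_option maxSynthPendingDepth 3

/-- Lax–Milgram stability estimate: a solution `u` of `A(u, ·) = F` with `A` a `c`-coercive form
satisfies `‖u‖ ≤ c⁻¹ ‖F‖`. -/
theorem norm_le_of_coercive_of_eq {V : Type*} [NormedAddCommGroup V] [NormedSpace ℝ V]
    {A : V →L[ℝ] V →L[ℝ] ℝ} {F : V →L[ℝ] ℝ} {c : ℝ} (hc : 0 < c)
    (hA : ∀ w : V, c * ‖w‖ ^ 2 ≤ A w w) {u : V} (hu : A u = F) :
    ‖u‖ ≤ c⁻¹ * ‖F‖ := by
  rw [le_inv_mul_iff₀ hc]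
  rcases (norm_nonneg u).eq_or_lt with h | h
  · simp [← h]
  · refine le_of_mul_le_mul_right ?_ h
    calc c * ‖u‖ * ‖u‖ = c * ‖u‖ ^ 2 := by ring
      _ ≤ F u := hu ▸ hA u
      _ ≤ ‖F‖ * ‖u‖ := (le_abs_self _).trans (F.le_opNorm u)

/-- Lipschitz stability of the coefficient-to-solution operator: if `A_p = a + B p` is
`c`-coercive for `p = q, r` and `u_q, u_r` are the corresponding Lax–Milgram solutions of
`A_p(u_p, φ) = F(φ)`, then `‖u_q − u_r‖ ≤ c⁻² ‖B‖ ‖F‖ ‖q − r‖`. -/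
theorem coefficient_to_solution_lipschitz
    {V E : Type*} [NormedAddCommGroup V] [InnerProductSpace ℝ V] [CompleteSpace V]
    [NormedAddCommGroup E] [NormedSpace ℝ E]
    (a : V →L[ℝ] V →L[ℝ] ℝ) (B : E →L[ℝ] V →L[ℝ] V →L[ℝ] ℝ) (F : V →L[ℝ] ℝ)
    (c : ℝ) (hc : 0 < c) (q r : E)
    (hcoq : ∀ w : V, c * ‖w‖ ^ 2 ≤ a w w + B q w w)
    (hcor : ∀ w : V, c * ‖w‖ ^ 2 ≤ a w w + B r w w)
    (uq ur : V)
    (huq : ∀ φ : V, a uq φ + B q uq φ = F φ)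
    (hur : ∀ φ : V, a ur φ + B r ur φ = F φ) :
    ‖uq - ur‖ ≤ c⁻¹ ^ 2 * ‖B‖ * ‖F‖ * ‖q - r‖ := by
  have hr : ‖ur‖ ≤ c⁻¹ * ‖F‖ :=
    norm_le_of_coercive_of_eq (A := a + B r) hc hcor (ContinuousLinearMap.ext hur)
  have hdiff : (a + B q) (uq - ur) = B (r - q) ur := by
    ext φ
    have hq := huq φ
    have hr := hur φ
    simp only [map_sub, add_apply, sub_apply]
    linarith
  calc ‖uq - ur‖ ≤ c⁻¹ * ‖B (r - q) ur‖ := norm_le_of_coercive_of_eq hc hcoq hdiff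
    _ ≤ c⁻¹ * (‖B‖ * ‖r - q‖ * (c⁻¹ * ‖F‖)) := by
      gcongr
      exact (B.le_opNorm₂ (r - q) ur).trans (by gcongr)
    _ = c⁻¹ ^ 2 * ‖B‖ * ‖F‖ * ‖q - r‖ := by
      rw [norm_sub_rev r q]
      ring
end

section
/- Let V be a real Hilbert space and E a real normed vector space. Let a : V × V → ℝ be a continuous bilinear form, B : E → (continuous bilinear forms on V) a continuous linear map with operator norm ‖B‖, and F : V → ℝ a continuous linear functional. For p ∈ E set A_p(w,φ) := a(w,φ) + (B p)(w,φ), and let c > 0. Suppose q, q+h ∈ E are such that A_q and A_{q+h} are both c-coercive, with Lax–Milgram solutions u_q, u_{q+h} of A_p(u_p, φ) = F(φ) for all φ ∈ V. Let ψ_h ∈ V be the unique solution of A_q(ψ_h, φ) = −(B h)(u_q, φ) for all φ ∈ V. Then: (i) ‖ψ_h‖_V ≤ c⁻² ‖B‖ ‖F‖ ‖h‖_E, and (ii) the quadratic remainder estimate ‖u_{q+h} − u_q − ψ_h‖_V ≤ c⁻³ ‖B‖² ‖F‖ ‖h‖²_E holds. In particular, if A_p is c-coercive for every p in an open set S ⊆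 E, then the solution map p ↦ u_p is Fréchet differentiable on S, with derivative at q acting on h given by ψ_h. -/
set_option maxSynthPendingDepth 3

section Coercive

variable {V E : Type*} [NormedAddCommGroup V] [InnerProductSpace ℝ V]
  [NormedAddCommGroup E] [NormedSpace ℝ E]

/-- The Lax–Milgram a priori estimate. -/
theorem norm_le_of_coercive {A : V →L[ℝ] V →L[ℝ] ℝ} {c K : ℝ} (hc : 0 < c) (hK : 0 ≤ K)
    (hA : ∀ w, c * ‖w‖ ^ 2 ≤ A w w) {u : V} (hu : A u u ≤ K * ‖u‖) : ‖u‖ ≤ c⁻¹ * K := by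
  rw [inv_mul_eq_div, le_div_iff₀ hc]
  rcases (norm_nonneg u).eq_or_lt with h0 | hpos
  · simpa [← h0] using hK
  · refine le_of_mul_le_mul_right ?_ hpos
    calc ‖u‖ * c * ‖u‖ = c * ‖u‖ ^ 2 := by ring
      _ ≤ K * ‖u‖ := (hA u).trans hu

/-- Existence in the Lax–Milgram theorem. -/
theorem exists_forall_eq_of_coercive [CompleteSpace V] {A : V →L[ℝ] V →L[ℝ] ℝ} {c : ℝ}
    (hc : 0 < c) (hA : ∀ w, c * ‖w‖ ^ 2 ≤ A w w) (F : V →L[ℝ] ℝ) :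
    ∃ u, ∀ φ, A u φ = F φ := by
  have hco : IsCoercive A := ⟨c, hc, fun w => by simpa [pow_two, mul_assoc] using hA w⟩
  refine ⟨hco.continuousLinearEquivOfBilin.symm ((InnerProductSpace.toDual ℝ V).symm F),
    fun φ => ?_⟩
  rw [← hco.continuousLinearEquivOfBilin_apply, ContinuousLinearEquiv.apply_symm_apply,
    InnerProductSpace.toDual_symm_apply]

/-- Solutions for a coercive form are unique. -/
theorem eq_of_coercive {A : V →L[ℝ] V →L[ℝ] ℝ} {c : ℝ} (hc : 0 < c)
    (hA : ∀ w, c * ‖w‖ ^ 2 ≤ A w w) {u v : V} (huv : ∀ φ, A u φ = A v φ) : u = v := by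
  have := norm_le_of_coercive hc le_rfl hA (u := u - v) (by simp [huv])
  exact sub_eq_zero.1 (norm_le_zero_iff.1 (by simpa using this))

/-- The stability estimate when the right-hand side is a perturbation `-(B h) v`. -/
theorem norm_le_of_coercive_of_eq_neg {A : V →L[ℝ] V →L[ℝ] ℝ} {B : E →L[ℝ] V →L[ℝ] V →L[ℝ] ℝ}
    {c : ℝ} (hc : 0 < c) (hA : ∀ w, c * ‖w‖ ^ 2 ≤ A w w) {h : E} {u v : V}
    (hu : ∀ φ, A u φ = -(B h v φ)) : ‖u‖ ≤ c⁻¹ * (‖B‖ * ‖h‖ * ‖v‖) := by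
  refine norm_le_of_coercive hc (by positivity) hA ?_
  rw [hu]
  calc -(B h v u) ≤ ‖B h v u‖ := neg_le_abs _
    _ ≤ ‖B h‖ * ‖v‖ * ‖u‖ := (B h).le_opNorm₂ v u
    _ ≤ ‖B‖ * ‖h‖ * ‖v‖ * ‖u‖ := by gcongr; exact B.le_opNorm h

theorem norm_solution_le {A : V →L[ℝ] V →L[ℝ] ℝ} {F : V →L[ℝ] ℝ} {c : ℝ} (hc : 0 < c)
    (hA : ∀ w, c * ‖w‖ ^ 2 ≤ A w w) {u : V} (hu : ∀ φ, A u φ = F φ) : ‖u‖ ≤ c⁻¹ * ‖F‖ :=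
  norm_le_of_coercive hc (norm_nonneg F) hA
    ((hu u).trans_le ((le_abs_self _).trans (F.le_opNorm u)))

/-- The quadratic remainder estimate for the linearization of the solution map. -/
theorem norm_solution_sub_sub_le {a : V →L[ℝ] V →L[ℝ] ℝ} {B : E →L[ℝ] V →L[ℝ] V →L[ℝ] ℝ}
    {F : V →L[ℝ] ℝ} {c : ℝ} (hc : 0 < c) {q h : E}
    (hcoq : ∀ w, c * ‖w‖ ^ 2 ≤ (a + B q) w w)
    (hcoqh : ∀ w, c * ‖w‖ ^ 2 ≤ (a + B (q + h)) w w) {uq uqh ψ : V}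
    (huq : ∀ φ, (a + B q) uq φ = F φ) (huqh : ∀ φ, (a + B (q + h)) uqh φ = F φ)
    (hψ : ∀ φ, (a + B q) ψ φ = -(B h uq φ)) :
    ‖uqh - uq - ψ‖ ≤ c⁻¹ ^ 3 * ‖B‖ ^ 2 * ‖F‖ * ‖h‖ ^ 2 := by
  have hdiff : ∀ φ, (a + B q) (uqh - uq) φ = -(B h uqh φ) := fun φ => by
    have h1 := huq φ
    have h2 := huqh φ
    simp only [map_add, map_sub, add_apply, sub_apply] at h1 h2 ⊢
    linarith
  have hrem : ∀ φ, (a + B q) (uqh - uq - ψ) φ = -(B h (uqh - uq) φ) := fun φ => by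
    rw [map_sub, sub_apply, hdiff, hψ, map_sub, sub_apply]
    ring
  have hF := norm_solution_le hc hcoqh huqh
  calc ‖uqh - uq - ψ‖ ≤ c⁻¹ * (‖B‖ * ‖h‖ * ‖uqh - uq‖) :=
        norm_le_of_coercive_of_eq_neg hc hcoq hrem
    _ ≤ c⁻¹ * (‖B‖ * ‖h‖ * (c⁻¹ * (‖B‖ * ‖h‖ * (c⁻¹ * ‖F‖)))) := by
        gcongr
        exact (norm_le_of_coercive_of_eq_neg hc hcoq hdiff).trans (by gcongr)
    _ = c⁻¹ ^ 3 * ‖B‖ ^ 2 * ‖F‖ * ‖h‖ ^ 2 := by ring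

/-- The solution of the linearized equation is a continuous linear function of the direction. -/
theorem exists_continuousLinearMap_of_coercive [CompleteSpace V] {A : V →L[ℝ] V →L[ℝ] ℝ} {c : ℝ}
    (hc : 0 < c) (hA : ∀ w, c * ‖w‖ ^ 2 ≤ A w w) (B : E →L[ℝ] V →L[ℝ] V →L[ℝ] ℝ) (u : V) :
    ∃ D : E →L[ℝ] V, ∀ k φ, A (D k) φ = -(B k u φ) := by
  choose d hd using fun k => exists_forall_eq_of_coercive hc hA (-(B k u))
  simp only [neg_apply] at hd
  let L : E →ₗ[ℝ] V :=
    { toFun := d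
      map_add' := fun x y => eq_of_coercive hc hA fun φ => by
        simp only [map_add, add_apply, hd]
        ring
      map_smul' := fun r x => eq_of_coercive hc hA fun φ => by
        simp only [map_smul, smul_apply, hd, RingHom.id_apply, smul_neg] }
  refine ⟨L.mkContinuous (c⁻¹ * (‖B‖ * ‖u‖)) fun k => ?_, hd⟩
  calc ‖d k‖ ≤ c⁻¹ * (‖B‖ * ‖k‖ * ‖u‖) := norm_le_of_coercive_of_eq_neg hc hA (hd k)
    _ = c⁻¹ * (‖B‖ * ‖u‖) * ‖k‖ := by ring

end Coercive

/-- First-order Fréchet differentiability of the coefficient-to-solution operator: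
with `A_p = a + B p` `c`-coercive, `u_q, u_{q+h}` the Lax–Milgram solutions of
`A_p(u_p, φ) = F(φ)` and `ψ_h` the solution of the linearized equation
`A_q(ψ_h, φ) = −(B h)(u_q, φ)`, one has (i) `‖ψ_h‖ ≤ c⁻²‖B‖‖F‖‖h‖`,
(ii) `‖u_{q+h} − u_q − ψ_h‖ ≤ c⁻³‖B‖²‖F‖‖h‖²`; and if `A_p` is `c`-coercive for every
`p` in an open set `S`, the solution map `p ↦ u_p` is Fréchet differentiable on `S`,
its derivative at `q` acting on `h` being the solution of the linearized equation. -/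
theorem coefficient_to_solution_frechet_differentiable
    {V E : Type*} [NormedAddCommGroup V] [InnerProductSpace ℝ V] [CompleteSpace V]
    [NormedAddCommGroup E] [NormedSpace ℝ E]
    (a : V →L[ℝ] V →L[ℝ] ℝ) (B : E →L[ℝ] V →L[ℝ] V →L[ℝ] ℝ) (F : V →L[ℝ] ℝ)
    (c : ℝ) (hc : 0 < c) (q h : E)
    (hcoq : ∀ w : V, c * ‖w‖ ^ 2 ≤ a w w + B q w w)
    (hcoqh : ∀ w : V, c * ‖w‖ ^ 2 ≤ a w w + B (q + h) w w)
    (uq uqh ψ : V)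
    (huq : ∀ φ : V, a uq φ + B q uq φ = F φ)
    (huqh : ∀ φ : V, a uqh φ + B (q + h) uqh φ = F φ)
    (hψ : ∀ φ : V, a ψ φ + B q ψ φ = -(B h uq φ))
    (S : Set E) (hS : IsOpen S)
    (hcoS : ∀ p ∈ S, ∀ w : V, c * ‖w‖ ^ 2 ≤ a w w + B p w w)
    (sol : E → V)
    (hsol : ∀ p ∈ S, ∀ φ : V, a (sol p) φ + B p (sol p) φ = F φ) :
    ‖ψ‖ ≤ c⁻¹ ^ 2 * ‖B‖ * ‖F‖ * ‖h‖ ∧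
    ‖uqh - uq - ψ‖ ≤ c⁻¹ ^ 3 * ‖B‖ ^ 2 * ‖F‖ * ‖h‖ ^ 2 ∧
    ∀ p ∈ S, ∃ D : E →L[ℝ] V, HasFDerivAt sol D p ∧
      ∀ k : E, ∀ φ : V, a (D k) φ + B p (D k) φ = -(B k (sol p) φ) := by
  refine ⟨?_, norm_solution_sub_sub_le hc hcoq hcoqh huq huqh hψ, fun p hp => ?_⟩
  · have hF := norm_solution_le (A := a + B q) hc hcoq huq
    calc ‖ψ‖ ≤ c⁻¹ * (‖B‖ * ‖h‖ * ‖uq‖) :=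
          norm_le_of_coercive_of_eq_neg (A := a + B q) hc hcoq hψ
      _ ≤ c⁻¹ * (‖B‖ * ‖h‖ * (c⁻¹ * ‖F‖)) := by gcongr
      _ = c⁻¹ ^ 2 * ‖B‖ * ‖F‖ * ‖h‖ := by ring
  · obtain ⟨D, hD⟩ :=
      exists_continuousLinearMap_of_coercive (A := a + B p) hc (hcoS p hp) B (sol p)
    refine ⟨D, ?_, hD⟩
    rw [hasFDerivAt_iff_isLittleO_nhds_zero]
    refine Asymptotics.IsBigO.trans_isLittleO (g := fun k : E => ‖k‖ ^ 2) ?_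
      (Asymptotics.isLittleO_norm_pow_id one_lt_two)
    refine Asymptotics.IsBigO.of_bound (c⁻¹ ^ 3 * ‖B‖ ^ 2 * ‖F‖) ?_
    have hmem : ∀ᶠ k in nhds (0 : E), p + k ∈ S :=
      (continuous_const.add continuous_id).continuousAt.eventually
        (hS.mem_nhds (by simpa using hp))
    filter_upwards [hmem] with k hk
    rw [norm_pow, norm_norm]
    exact norm_solution_sub_sub_le hc (hcoS p hp) (hcoS _ hk) (hsol p hp) (hsol _ hk) (hD k)
end

section
/- Let V, E and H be real Hilbert spaces. Let a : V × V → ℝ be a continuous bilinear form, B : E → (continuous bilinear forms on V) a continuous linear map, F : V → ℝ a continuous linear functional, and for p ∈ E set A_p(w,φ) := a(w,φ) + (B p)(w,φ). Let c > 0, let L : V → H be a continuous linear map, z ∈ H, q* ∈ E, ρ > 0, and let Q ⊆ E be a convex set. For p with A_p c-coercive, let u_p be the Lax–Milgram solution of A_p(u_p, φ) = F(φ) for all φ ∈ V, and define J(p) := (1/2)‖L u_p − z‖²_H + (ρ/2)‖p − q*‖²_E. Suppose A_p is c-coercive for every p ∈ Q and for every p in some open neighborhood of a point q ∈ Q, and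 suppose q is a local minimizer of J on Q. Let P ∈ V be the unique solution of the adjoint equation A_q(w, P) = ⟪L u_q − z, L w⟫_H for all w ∈ V. Then for every p ∈ Q the first-order optimality condition holds: ρ ⟪q − q*, p − q⟫_E − (B (p − q))(u_q, P) ≥ 0. -/
set_option maxSynthPendingDepth 3

open scoped RealInnerProductSpace

/-- A linear coefficient that dominates a quadratic remainder for all small `t > 0` is
nonnegative. -/
lemma nonneg_of_forall_small_mul_add_sq {G K δ : ℝ} (hδ : 0 < δ)
    (h : ∀ t : ℝ, 0 < t → t < δ → 0 ≤ t * G + t ^ 2 * K) : 0 ≤ G := by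
  have hlim : Filter.Tendsto (fun t : ℝ => G + t * K) (nhdsWithin 0 (Set.Ioi 0)) (nhds G) := by
    have hcont : Continuous fun t : ℝ => G + t * K := by fun_prop
    simpa using (hcont.tendsto 0).mono_left nhdsWithin_le_nhds
  refine ge_of_tendsto hlim ?_
  filter_upwards [Ioo_mem_nhdsGT hδ] with t ht
  refine nonneg_of_mul_nonneg_right ?_ ht.1
  linarith [h t ht.1 ht.2]

/-- A priori bound for a coercive variational equation with right-hand side `f`. -/
lemma norm_le_div_of_coercive {V : Type*} [NormedAddCommGroup V] [InnerProductSpace ℝ V]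
    {A : V →L[ℝ] V →L[ℝ] ℝ} {c : ℝ} (hc : 0 < c) {d : V} (hA : c * ‖d‖ ^ 2 ≤ A d d)
    {f : V →L[ℝ] ℝ} (hd : A d d = f d) : ‖d‖ ≤ ‖f‖ / c := by
  rw [le_div_iff₀ hc]
  rcases (norm_nonneg d).eq_or_lt with h0 | hpos
  · simp [← h0]
  · refine le_of_mul_le_mul_right ?_ hpos
    have := (le_abs_self (f d)).trans (f.le_opNorm d)
    linarith [pow_two ‖d‖]

/-- First-order optimality condition for the abstract (extended) identification problem:
if `q ∈ Q` is a local minimizer on the convex set `Q` of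
`J(p) = ½‖L u_p − z‖² + (ρ/2)‖p − q*‖²`, where `u_p` is the Lax–Milgram solution of
`A_p(u_p, φ) = F(φ)` with `A_p = a + B p` `c`-coercive on `Q` and on an open
neighborhood of `q`, and `P` solves the adjoint equation
`A_q(w, P) = ⟪L u_q − z, L w⟫` for all `w`, then for every `p ∈ Q`:
`ρ⟪q − q*, p − q⟫ − (B(p − q))(u_q, P) ≥ 0`. -/
theorem extended_identification_first_order_optimality
    {V E H : Type*}
    [NormedAddCommGroup V] [InnerProductSpace ℝ V] [CompleteSpace V]
    [NormedAddCommGroup E] [InnerProductSpace ℝ E] [CompleteSpace E]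
    [NormedAddCommGroup H] [InnerProductSpace ℝ H] [CompleteSpace H]
    (a : V →L[ℝ] V →L[ℝ] ℝ) (B : E →L[ℝ] V →L[ℝ] V →L[ℝ] ℝ) (F : V →L[ℝ] ℝ)
    (c : ℝ) (hc : 0 < c)
    (L : V →L[ℝ] H) (z : H) (qstar : E) (ρ : ℝ) (hρ : 0 < ρ)
    (Q : Set E) (hQ : Convex ℝ Q)
    (sol : E → V)
    (hsol : ∀ p : E, (∀ w : V, c * ‖w‖ ^ 2 ≤ a w w + B p w w) →
      ∀ φ : V, a (sol p) φ + B p (sol p) φ = F φ)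
    (J : E → ℝ)
    (hJ : ∀ p, J p = (1 / 2) * ‖L (sol p) - z‖ ^ 2 + (ρ / 2) * ‖p - qstar‖ ^ 2)
    (q : E) (hqQ : q ∈ Q)
    (hcoQ : ∀ p ∈ Q, ∀ w : V, c * ‖w‖ ^ 2 ≤ a w w + B p w w)
    (S : Set E) (hS : IsOpen S) (hqS : q ∈ S)
    (hcoS : ∀ p ∈ S, ∀ w : V, c * ‖w‖ ^ 2 ≤ a w w + B p w w)
    (hmin : ∃ ε > 0, ∀ p ∈ Q, ‖p - q‖ < ε → J q ≤ J p)
    (P : V)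
    (hP : ∀ w : V, a w P + B q w P = ⟪L (sol q) - z, L w⟫) :
    ∀ p ∈ Q, 0 ≤ ρ * ⟪q - qstar, p - q⟫ - B (p - q) (sol q) P := by
  intro p hp
  obtain ⟨ε, hε, hmin⟩ := hmin
  set h := p - q
  set u := sol q
  set M := ‖B h u‖ / c
  have hM0 : 0 ≤ M := by positivity
  refine nonneg_of_forall_small_mul_add_sq (δ := min 1 (ε / (‖h‖ + 1)))
    (K := ‖B h‖ * M * ‖P‖ + (1 / 2) * (‖L‖ * M) ^ 2 + (ρ / 2) * ‖h‖ ^ 2) (by positivity) ?_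
  intro t ht htδ
  have ht1 : t < 1 := htδ.trans_le (min_le_left _ _)
  have htε : t * (‖h‖ + 1) < ε :=
    (lt_div_iff₀ (by positivity)).1 (htδ.trans_le (min_le_right _ _))
  have hmem : q + t • h ∈ Q := hQ.add_smul_sub_mem hqQ hp ⟨ht.le, ht1.le⟩
  have hJle : J q ≤ J (q + t • h) := by
    refine hmin _ hmem ?_
    rw [add_sub_cancel_left, norm_smul, Real.norm_of_nonneg ht.le]
    linarith
  obtain ⟨d, hd⟩ : ∃ d, sol (q + t • h) = u + d := ⟨sol (q + t • h) - u, by abel⟩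
  have hstate : ∀ φ, a d φ + B q d φ + t * B h d φ = -(t * B h u φ) := by
    intro φ
    have h1 := hsol _ (hcoQ _ hmem) φ
    have h2 : a u φ + B q u φ = F φ := hsol q (hcoQ q hqQ) φ
    simp only [hd, map_add, map_smul, add_apply, smul_apply, smul_eq_mul] at h1
    linarith
  have hdM : ‖d‖ ≤ t * M := by
    have hb := norm_le_div_of_coercive (A := a + B (q + t • h)) (f := -(t • B h u)) hc
      (by simpa using hcoQ _ hmem d)
      (by simpa [add_assoc] using hstate d)
    rwa [norm_neg, norm_smul, Real.norm_of_nonneg ht.le, mul_div_assoc] at hb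
  have hLd : ‖L d‖ ≤ t * (‖L‖ * M) :=
    calc ‖L d‖ ≤ ‖L‖ * ‖d‖ := L.le_opNorm d
      _ ≤ ‖L‖ * (t * M) := by gcongr
      _ = t * (‖L‖ * M) := by ring
  have hLd2 : ‖L d‖ ^ 2 ≤ (t * (‖L‖ * M)) ^ 2 := by gcongr
  have hBd : -(B h d P) ≤ t * (‖B h‖ * M * ‖P‖) :=
    calc -(B h d P) ≤ ‖B h d P‖ := neg_le_abs _
      _ ≤ ‖B h‖ * ‖d‖ * ‖P‖ := (B h).le_opNorm₂ d P
      _ ≤ ‖B h‖ * (t * M) * ‖P‖ := by gcongr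
      _ = t * (‖B h‖ * M * ‖P‖) := by ring
  have hBd' := mul_le_mul_of_nonneg_left hBd ht.le
  have hadj : ⟪L u - z, L d⟫ = -(t * B h u P) - t * B h d P := by
    rw [← hP d]
    linarith [hstate P]
  have hmisfit : ‖L (u + d) - z‖ ^ 2 = ‖L u - z‖ ^ 2 + 2 * ⟪L u - z, L d⟫ + ‖L d‖ ^ 2 := by
    rw [← norm_add_sq_real, map_add, add_sub_right_comm]
  have hreg : ‖q + t • h - qstar‖ ^ 2
      = ‖q - qstar‖ ^ 2 + 2 * (t * ⟪q - qstar, h⟫) + t ^ 2 * ‖h‖ ^ 2 := by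
    rw [add_sub_right_comm, norm_add_sq_real, real_inner_smul_right, norm_smul,
      Real.norm_of_nonneg ht.le, mul_pow]
  rw [hJ, hJ, hd, hmisfit, hreg, hadj] at hJle
  linarith
end

section
/- Let E be a real normed vector space, K ⊆ E a convex set, θ > 0, and let J, R : E → ℝ be functionals such that J is twice continuously Fréchet differentiable and R is Fréchet differentiable at a point r ∈ K. Let q ∈ K and suppose: (i) D²J(x)(h,h) ≥ θ‖h‖² for every x on the segment joining q and r and every h ∈ E; (ii) J'(q)(p − q) ≥ 0 for all p ∈ K; (iii) R'(r)(p − r) ≥ 0 for all p ∈ K. Then θ ‖q − r‖² ≤ (J'(r) − R'(r))(r − q), and consequently ‖q − r‖ ≤ θ⁻¹ ‖J'(r) − R'(r)‖, where ‖J'(r) − R'(r)‖ is the operator norm of the continuous linear functional J'(r) − R'(r) on E. -/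
/-- If the second derivative of `J` is coercive with constant `θ` on the segment `[q, r]`, then
the derivative of `J` is strongly monotone between `q` and `r`. -/
theorem mul_norm_sq_le_fderiv_sub_of_coercive_segment
    {E : Type*} [NormedAddCommGroup E] [NormedSpace ℝ E] {θ : ℝ} {J : E → ℝ} {q r : E}
    (hJ : ∀ x ∈ segment ℝ q r, DifferentiableAt ℝ (fderiv ℝ J) x)
    (hcoercive : ∀ x ∈ segment ℝ q r, ∀ h : E,
      θ * ‖h‖ ^ 2 ≤ fderiv ℝ (fderiv ℝ J) x h h) :
    θ * ‖r - q‖ ^ 2 ≤ fderiv ℝ J r (r - q) - fderiv ℝ J q (r - q) := by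
  have hderiv : ∀ x ∈ segment ℝ q r, HasFDerivWithinAt (fun y ↦ fderiv ℝ J y (r - q))
      ((fderiv ℝ (fderiv ℝ J) x).flip (r - q)) (segment ℝ q r) x := fun x hx ↦
    (((ContinuousLinearMap.apply ℝ ℝ (r - q)).hasFDerivAt.comp x
      (hJ x hx).hasFDerivAt).congr_fderiv (by ext; simp)).hasFDerivWithinAt
  obtain ⟨z, hz, hmvt⟩ := domain_mvt hderiv (convex_segment q r)
    (left_mem_segment ℝ q r) (right_mem_segment ℝ q r)
  rw [hmvt]
  exact hcoercive z hz (r - q)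

/-- Abstract perturbation bound for minimizers: if `J` is twice continuously Fréchet
differentiable with `D²J(x)(h,h) ≥ θ‖h‖²` on the segment joining `q` and `r`, `R` is
Fréchet differentiable at `r`, `q, r ∈ K` with `K` convex, and the first-order
variational inequalities `J'(q)(p − q) ≥ 0` and `R'(r)(p − r) ≥ 0` hold for all `p ∈ K`,
then `θ‖q − r‖² ≤ (J'(r) − R'(r))(r − q)` and hence
`‖q − r‖ ≤ θ⁻¹‖J'(r) − R'(r)‖`. -/
theorem perturbation_bound_for_minimizers
    {E : Type*} [NormedAddCommGroup E] [NormedSpace ℝ E]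
    (K : Set E) (hK : Convex ℝ K) (θ : ℝ) (hθ : 0 < θ)
    (J R : E → ℝ) (hJ : ContDiff ℝ 2 J)
    (q r : E) (hq : q ∈ K) (hr : r ∈ K)
    (hR : DifferentiableAt ℝ R r)
    (hcoercive : ∀ x ∈ segment ℝ q r, ∀ h : E,
      θ * ‖h‖ ^ 2 ≤ fderiv ℝ (fderiv ℝ J) x h h)
    (hJfoc : ∀ p ∈ K, 0 ≤ fderiv ℝ J q (p - q))
    (hRfoc : ∀ p ∈ K, 0 ≤ fderiv ℝ R r (p - r)) :
    θ * ‖q - r‖ ^ 2 ≤ (fderiv ℝ J r - fderiv ℝ R r) (r - q) ∧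
      ‖q - r‖ ≤ θ⁻¹ * ‖fderiv ℝ J r - fderiv ℝ R r‖ := by
  have hJderiv : Differentiable ℝ (fderiv ℝ J) :=
    (hJ.fderiv_right (m := 1) (by norm_num)).differentiable one_ne_zero
  have hbound : θ * ‖q - r‖ ^ 2 ≤ (fderiv ℝ J r - fderiv ℝ R r) (r - q) := by
    have hmono := mul_norm_sq_le_fderiv_sub_of_coercive_segment (fun x _ ↦ hJderiv x) hcoercive
    have hq_foc := hJfoc r hr
    have hr_foc := hRfoc q hq
    rw [← neg_sub r q, map_neg] at hr_foc
    rw [norm_sub_rev, sub_apply]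
    linarith
  refine ⟨hbound, ?_⟩
  rw [le_inv_mul_iff₀ hθ]
  rcases (norm_nonneg (q - r)).eq_or_lt with hzero | hpos
  · simp [← hzero]
  · refine le_of_mul_le_mul_right ?_ hpos
    calc θ * ‖q - r‖ * ‖q - r‖ = θ * ‖q - r‖ ^ 2 := by ring
      _ ≤ (fderiv ℝ J r - fderiv ℝ R r) (r - q) := hbound
      _ ≤ ‖(fderiv ℝ J r - fderiv ℝ R r) (r - q)‖ := Real.le_norm_self _
      _ ≤ ‖fderiv ℝ J r - fderiv ℝ R r‖ * ‖q - r‖ := by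
        rw [norm_sub_rev q r]
        exact ContinuousLinearMap.le_opNorm _ _
end
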